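/- Suppose the instance (𝒳, ℋ, A, B) follows linear sequence dynamics with the ξ-weighted p-norm for some p ≥ 1. Then for every k ≥ 1, ξ_k · ‖A_{k-1} ∘ A_{k-2} ∘ ⋯ ∘ A_0‖ ≤ ‖A^k‖, where the left-hand norm is the operator norm on 𝒲 and the right-hand norm is the operator norm of A^k on ℋ. -/

import Mathlib

/-- A nonnegative term of a `p`-summable family is at most the `p`-norm of the family. -/
theorem le_rpow_tsum_rpow {ι : Type*} {f : ι → ℝ} {p : ℝ} (hp : 0 < p) (hf : ∀ i, 0 ≤ f i)
    (hs : Summable fun i => f i ^ p) (i : ι) : f i ≤ (∑' j, f j ^ p) ^ (1 / p) := by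
  calc f i = (f i ^ p) ^ (1 / p) := by
        rw [← Real.rpow_mul (hf i), mul_one_div_cancel hp.ne', Real.rpow_one]
    _ ≤ (∑' j, f j ^ p) ^ (1 / p) :=
        Real.rpow_le_rpow (Real.rpow_nonneg (hf i) p)
          (hs.le_tsum i fun j _ => Real.rpow_nonneg (hf j) p) (by positivity)

/-- For an instance following linear sequence dynamics with the ξ-weighted
`p`-norm, for every `k ≥ 1` one has `ξ_k ⬝ ‖A_{k-1} ∘ ⋯ ∘ A_0‖ ≤ ‖Aᵏ‖`, where `Φ k`
denotes the composition `A_{k-1} ∘ ⋯ ∘ A_0` (so `Φ 0 = id`, `Φ (k+1) = A_k ∘ Φ k`). -/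
theorem stmt_2
    {W : Type*} [NormedAddCommGroup W] [InnerProductSpace ℝ W] [CompleteSpace W]
    {H : Type*} [NormedAddCommGroup H] [NormedSpace ℝ H] [CompleteSpace H]
    (A : H →L[ℝ] H) (B : W →L[ℝ] H) (hB : ‖B‖ ≤ 1)
    (p : ℝ) (hp : 1 ≤ p)
    (xi : ℕ → ℝ) (hxi0 : xi 0 = 1) (hxi : ∀ i, 0 ≤ xi i)
    (coord : ℕ → H →ₗ[ℝ] W) (Aops : ℕ → W →L[ℝ] W)
    (hsummable : ∀ y : H, Summable fun i : ℕ => (xi i * ‖coord i y‖) ^ p)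
    (hnorm : ∀ y : H, ‖y‖ = (∑' i : ℕ, (xi i * ‖coord i y‖) ^ p) ^ (1 / p))
    (hA0 : ∀ y : H, coord 0 (A y) = 0)
    (hAsucc : ∀ (y : H) (i : ℕ), coord (i + 1) (A y) = Aops i (coord i y))
    (hB0 : ∀ x : W, coord 0 (B x) = x)
    (hBsucc : ∀ (x : W) (i : ℕ), coord (i + 1) (B x) = 0)
    (Phi : ℕ → W →L[ℝ] W)
    (hPhi0 : Phi 0 = 1)
    (hPhiSucc : ∀ k : ℕ, Phi (k + 1) = (Aops k).comp (Phi k)) :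
    ∀ k : ℕ, 1 ≤ k → xi k * ‖Phi k‖ ≤ ‖A ^ k‖ := by
  intro k _
  have hcoord : ∀ (n : ℕ) (x : W), coord n ((A ^ n) (B x)) = Phi n x := by
    intro n x
    induction n with
    | zero => simp [hPhi0, hB0]
    | succ n ih => rw [pow_succ', mul_apply_eq_comp, hAsucc, ih, hPhiSucc, ContinuousLinearMap.comp_apply]
  have hle : ∀ y : H, xi k * ‖coord k y‖ ≤ ‖y‖ := fun y => by
    rw [hnorm y]
    exact le_rpow_tsum_rpow (f := fun i => xi i * ‖coord i y‖) (by linarith)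
      (fun i => mul_nonneg (hxi i) (norm_nonneg _)) (hsummable y) k
  calc xi k * ‖Phi k‖ = ‖xi k • Phi k‖ := by
        rw [norm_smul, Real.norm_of_nonneg (hxi k)]
    _ ≤ ‖A ^ k‖ := ContinuousLinearMap.opNorm_le_bound _ (norm_nonneg _) fun x => by
        calc ‖(xi k • Phi k) x‖ = xi k * ‖coord k ((A ^ k) (B x))‖ := by
              rw [smul_apply, norm_smul, Real.norm_of_nonneg (hxi k), hcoord]
          _ ≤ ‖(A ^ k) (B x)‖ := hle _
          _ ≤ ‖A ^ k‖ * ‖B x‖ := (A ^ k).le_opNorm _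
          _ ≤ ‖A ^ k‖ * ‖x‖ := by
              gcongr
              simpa using B.le_of_opNorm_le hB x
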